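/- Let A = Σ a_i X^i, B = Σ b_i X^i ∈ D[X] have degree d and valuation 0, let (S_i)_{−1 ≤ i ≤ d} be their sequence of symmetric subresultants, and suppose the pair (S_j, S_{j+1}) is (α,β)-defective. If j > 0, then lc(S_j)·S_j(0)·S_{j+α+β+1} = −lc(S_{j+1})·S_{j+α+β}(0)·srem(S_j, S_{j+1}) = −srem(lc(S_{j+1})·S_{j+α+β}(0)·S_j, S_{j+1}). If j = 0, then b_d·S_{α+β+1} = −srem(lc(S_1)·S_{α+β}(0)·S_0, S_1). -/

import Mathlib

open Polynomial

/-- The `2j × 2j` square submatrix `Sylv_{j,ℓ}(A,B)` of the Sylvester-type matrix of `A` and `B`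
(of formal degree `d`): rows are the coefficient vectors of `A, XA, …, X^{j-1}A, B, …, X^{j-1}B`,
keeping the columns of degrees `0, …, j-2`, the column of degree `j-1+ℓ`, and the columns of
degrees `d, …, d+j-1`. -/
noncomputable def sylvMat {R : Type*} [CommRing R] (A B : R[X]) (d j ℓ : ℕ) :
    Matrix (Fin (2 * j)) (Fin (2 * j)) R := fun r c =>
  (if (r : ℕ) < j then X ^ (r : ℕ) * A else X ^ ((r : ℕ) - j) * B).coeff
    (if (c : ℕ) < j - 1 then (c : ℕ)
     else if (c : ℕ) = j - 1 then j - 1 + ℓ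
     else d + ((c : ℕ) - j))

/-- The sequence of symmetric subresultants of `A` and `B` (of formal degree `d`):
`S_0 = B` and `S_j = ∑_{ℓ=0}^{d-j} det (Sylv_{j,ℓ}(A,B)) · X^ℓ` for `1 ≤ j`. -/
noncomputable def symSubres {R : Type*} [CommRing R] (A B : R[X]) (d j : ℕ) : R[X] :=
  if j = 0 then B
  else ∑ ℓ ∈ Finset.range (d - j + 1), C (sylvMat A B d j ℓ).det * X ^ ℓ

/-- The pair `(S_j, S_{j+1})` of symmetric subresultants of `A`, `B` (formal degree `d`) is
`(α,β)`-defective: `v(S_j) = 0`, `deg S_j = d - j`, `v(S_{j+1}) = α`, `deg S_{j+1} = d - j - β`. -/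
def IsDefective {R : Type*} [CommRing R] (A B : R[X]) (d j α β : ℕ) : Prop :=
  (symSubres A B d j).coeff 0 ≠ 0 ∧
  (symSubres A B d j).natDegree + j = d ∧
  symSubres A B d (j + 1) ≠ 0 ∧
  (symSubres A B d (j + 1)).natTrailingDegree = α ∧
  (symSubres A B d (j + 1)).natDegree + β + j = d

/-!
Put `s_m = det Sylv_{m,0}`, which is `S_m(0)` for `m > 0` and `1`, the empty determinant, for
`m = 0`. Laplace expansion along the varying column gives cofactor relations
`X^m S_{m+1} = U A + V B`, where `V` has degree at most `m` and `X^m`-coefficient `-a_d s_m`.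
Two such relations with left-hand sides `X^n P₁` and `X^n P₂` give
`A (U₁ V₂ - U₂ V₁) = X^n (P₁ V₂ - P₂ V₁)`; since `A(0) ≠ 0` and the degrees on the right are at
most `n + d`, the cross determinant `U₁ V₂ - U₂ V₁` is a monomial, with a coefficient that can be
read off. The Plücker relation between the relations of `S_j`, `S_{j+1}` and `S_{j+α+β+1}` then
becomes the symmetric division of a multiple of `S_j` by `S_{j+1}`. The convention `s_0 = 1` makes
this work for `j = 0` and `j > 0` alike.
-/

section Polynomial

variable {R : Type*} [CommRing R]

lemma coeff_divByMonic_X_pow (P : R[X]) (k n : ℕ) : (P /ₘ X ^ k).coeff n = P.coeff (n + k) := by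
  nontriviality R
  have hlt : (P %ₘ X ^ k).degree < ((n + k : ℕ) : WithBot ℕ) :=
    (degree_modByMonic_lt P (monic_X_pow k)).trans_le
      (by rw [degree_X_pow]; exact_mod_cast Nat.le_add_left k n)
  conv_rhs => rw [← modByMonic_add_div P (X ^ k)]
  rw [coeff_add, coeff_X_pow_mul, coeff_eq_zero_of_degree_lt hlt, zero_add]

lemma X_pow_mul_divByMonic_eq_self {P : R[X]} {k : ℕ} (h : k ≤ P.natTrailingDegree) :
    X ^ k * (P /ₘ X ^ k) = P := by
  have hdvd : X ^ k ∣ P := X_pow_dvd_iff.2 fun _ hn =>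
    coeff_eq_zero_of_lt_natTrailingDegree (hn.trans_le h)
  conv_rhs => rw [← modByMonic_add_div P (X ^ k),
    (modByMonic_eq_zero_iff_dvd (monic_X_pow k)).2 hdvd, zero_add]

lemma degree_mul_lt_of_natDegree_le {P Q : R[X]} {m n : ℕ} (hP : P.natDegree ≤ m)
    (hQ : Q.degree < n) : (P * Q).degree < ((m + n : ℕ) : WithBot ℕ) :=
  calc (P * Q).degree ≤ P.degree + Q.degree := degree_mul_le P Q
    _ ≤ m + Q.degree := by gcongr; exact natDegree_le_iff_degree_le.1 hP
    _ < m + n := WithBot.add_lt_add_left (WithBot.natCast_ne_bot m) hQ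
    _ = ((m + n : ℕ) : WithBot ℕ) := (Nat.cast_add m n).symm

variable [IsDomain R]

lemma exists_eq_X_pow_mul_of_mul_eq {P Q T : R[X]} {n : ℕ} (hP : P.coeff 0 ≠ 0)
    (h : P * Q = X ^ n * T) : ∃ q, Q = X ^ n * q ∧ P * q = T := by
  obtain ⟨q, rfl⟩ : X ^ n ∣ Q :=
    prime_X.pow_dvd_of_dvd_mul_left n (by rwa [X_dvd_iff]) ⟨T, h⟩
  refine ⟨q, rfl, mul_left_cancel₀ (pow_ne_zero n X_ne_zero) ?_⟩
  rw [← h, mul_left_comm]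

lemma eq_C_of_mul_eq {P Q T : R[X]} {t : R} (hP : P ≠ 0) (h : P * Q = T)
    (hT : T.natDegree ≤ P.natDegree) (ht : T.coeff P.natDegree = P.leadingCoeff * t) :
    Q = C t := by
  have hQ : Q.natDegree = 0 := by
    by_cases hQ0 : Q = 0
    · rw [hQ0, natDegree_zero]
    · have := natDegree_mul hP hQ0
      rw [h] at this
      lia
  obtain ⟨x, rfl⟩ := natDegree_eq_zero.1 hQ
  rw [← h, coeff_mul_C] at ht
  rw [mul_left_cancel₀ (leadingCoeff_ne_zero.2 hP) ht]

lemma cross_cofactors_eq_monomial {A B U₁ V₁ P₁ U₂ V₂ P₂ : R[X]} {n m : ℕ} {s : R}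
    (hA : A.coeff 0 ≠ 0) (h₁ : U₁ * A + V₁ * B = X ^ n * P₁) (h₂ : U₂ * A + V₂ * B = X ^ n * P₂)
    (hV₂ : V₂.natDegree ≤ m) (hP₁ : m + P₁.natDegree = A.natDegree)
    (hlt : (V₁ * P₂).degree < A.natDegree) (hs : V₂.coeff m = -(A.leadingCoeff * s)) :
    U₁ * V₂ - U₂ * V₁ = X ^ n * C (-(P₁.leadingCoeff * s)) := by
  have hcross : A * (U₁ * V₂ - U₂ * V₁) = X ^ n * (V₂ * P₁ - V₁ * P₂) := by
    linear_combination V₂ * h₁ - V₁ * h₂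
  obtain ⟨q, hq, hAq⟩ := exists_eq_X_pow_mul_of_mul_eq hA hcross
  have hdeg : (V₂ * P₁ - V₁ * P₂).natDegree ≤ A.natDegree :=
    (natDegree_sub_le _ _).trans (max_le (natDegree_mul_le.trans (by lia))
      (natDegree_le_iff_degree_le.2 hlt.le))
  have hcoeff : (V₂ * P₁ - V₁ * P₂).coeff A.natDegree =
      A.leadingCoeff * -(P₁.leadingCoeff * s) := by
    rw [coeff_sub, coeff_eq_zero_of_degree_lt hlt, ← hP₁,
      coeff_mul_add_eq_of_natDegree_le hV₂ le_rfl, hs, coeff_natDegree]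
    ring
  have hA_ne : A ≠ 0 := fun h => hA (by rw [h, coeff_zero])
  rw [hq, eq_C_of_mul_eq hA_ne hAq hdeg hcoeff]

end Polynomial

/-- `S` is a symmetric remainder of `P` by `P₁`: `P = Q·(P₁/X^α) + X^β·S` for some `Q`, and
`deg S < e - (α + β)`. Here `e` is the degree of `P`, `α` the valuation of `P₁` and `e - β` its
degree; they are parameters so that `P` may be multiplied by a constant, possibly zero. -/
def IsSymmRem {R : Type*} [CommRing R] (e α β : ℕ) (P P₁ S : R[X]) : Prop :=
  S.degree < ((e - (α + β) : ℕ) : WithBot ℕ) ∧ ∃ Q, P = Q * (P₁ /ₘ X ^ α) + X ^ β * S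

namespace IsSymmRem

variable {R : Type*} [CommRing R] {e α β : ℕ} {P P₁ S : R[X]}

lemma C_mul (c : R) (h : IsSymmRem e α β P P₁ S) :
    IsSymmRem e α β (C c * P) P₁ (C c * S) := by
  obtain ⟨hS, Q, hQ⟩ := h
  refine ⟨?_, C c * Q, by rw [hQ]; ring⟩
  rw [← smul_eq_C_mul]
  exact (degree_smul_le c S).trans_lt hS

lemma map {K : Type*} [CommRing K] (φ : R →+* K) (h : IsSymmRem e α β P P₁ S) :
    IsSymmRem e α β (P.map φ) (P₁.map φ) (S.map φ) := by
  obtain ⟨hS, Q, hQ⟩ := h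
  refine ⟨degree_map_le.trans_lt hS, Q.map φ, ?_⟩
  simp only [hQ, Polynomial.map_add, Polynomial.map_mul, Polynomial.map_pow, map_X,
    map_divByMonic φ (monic_X_pow α)]

lemma unique [IsDomain R] {S' : R[X]} (hα : P₁.coeff α ≠ 0)
    (hβ : e - (α + β) ≤ P₁.natDegree - α) (h : IsSymmRem e α β P P₁ S)
    (h' : IsSymmRem e α β P P₁ S') : S = S' := by
  obtain ⟨hS, Q, hQ⟩ := h
  obtain ⟨hS', Q', hQ'⟩ := h'
  set T := P₁ /ₘ X ^ α with hT
  have hT0 : T.coeff 0 ≠ 0 := by rwa [hT, coeff_divByMonic_X_pow, zero_add]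
  have hT_ne : T ≠ 0 := fun h => hT0 (by rw [h, coeff_zero])
  have hTdeg : T.natDegree = P₁.natDegree - α := by
    rw [hT, natDegree_divByMonic P₁ (monic_X_pow α), natDegree_X_pow]
  have hdiff : T * (Q' - Q) = X ^ β * (S - S') := by linear_combination hQ - hQ'
  obtain ⟨q, -, hq⟩ := exists_eq_X_pow_mul_of_mul_eq hT0 hdiff
  refine sub_eq_zero.1 (eq_zero_of_dvd_of_degree_lt ⟨q, hq.symm⟩ ?_)
  calc (S - S').degree < ((e - (α + β) : ℕ) : WithBot ℕ) :=
        (degree_sub_le S S').trans_lt (max_lt hS hS')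
    _ ≤ T.degree := by
        rw [degree_eq_natDegree hT_ne, hTdeg]
        exact_mod_cast hβ

end IsSymmRem

section Sylvester

variable {R : Type*} [CommRing R] (A B : R[X]) (d m : ℕ)

/-- The polynomial in row `r` of `Sylv_{j,ℓ}(A,B)`: `X^r A` for `r < j`, and `X^{r-j} B` for
`j ≤ r < 2j`. -/
noncomputable def sylvRow (j r : ℕ) : R[X] := if r < j then X ^ r * A else X ^ (r - j) * B

variable {A B d m} in
lemma coeff_sylvRow_eq_zero {j r n : ℕ} (hA : A.natDegree ≤ d) (hB : B.natDegree ≤ d)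
    (hlt : r < j → d + r < n) (hge : j ≤ r → d + (r - j) < n) :
    (sylvRow A B j r).coeff n = 0 := by
  unfold sylvRow
  split_ifs with hr
  · have := hlt hr
    rw [coeff_X_pow_mul', if_pos (by lia), coeff_eq_zero_of_natDegree_lt (by lia)]
  · have := hge (not_lt.1 hr)
    rw [coeff_X_pow_mul', if_pos (by lia), coeff_eq_zero_of_natDegree_lt (by lia)]

lemma updateCol_sylvMat_coeff_sylvRow (l : ℕ) :
    (sylvMat A B d (m + 1) 0).updateCol ⟨m, by lia⟩
      (fun r => (sylvRow A B (m + 1) r).coeff (m + l)) = sylvMat A B d (m + 1) l := by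
  ext r c
  by_cases hc : c = ⟨m, by lia⟩
  · subst hc
    simp [sylvRow, sylvMat]
  · have hcm : (c : ℕ) ≠ m := fun h => hc (Fin.ext h)
    simp [Matrix.updateCol_ne hc, sylvMat, hcm]

variable {A B d} in
lemma det_updateCol_sylvMat_eq_zero (hA : A.natDegree ≤ d) (hB : B.natDegree ≤ d) {n : ℕ}
    (hn : n < m ∨ d ≤ n) :
    ((sylvMat A B d (m + 1) 0).updateCol ⟨m, by lia⟩
      (fun r => (sylvRow A B (m + 1) r).coeff n)).det = 0 := by
  by_cases hbig : d + m < n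
  · refine Matrix.det_eq_zero_of_column_eq_zero ⟨m, by lia⟩ fun r => ?_
    rw [Matrix.updateCol_self]
    exact coeff_sylvRow_eq_zero hA hB (by lia) (by lia)
  · obtain ⟨c, hcm, hcn⟩ : ∃ c : Fin (2 * (m + 1)), (c : ℕ) ≠ m ∧
        (if (c : ℕ) < m then (c : ℕ) else d + ((c : ℕ) - (m + 1))) = n := by
      rcases hn with hn | hn
      · exact ⟨⟨n, by lia⟩, by dsimp only; lia, if_pos hn⟩
      · exact ⟨⟨m + 1 + (n - d), by lia⟩, by dsimp only; lia, by
          rw [if_neg (by dsimp only; lia)]; dsimp only; lia⟩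
    have hc : c ≠ ⟨m, by lia⟩ := fun h => hcm (congrArg Fin.val h)
    refine Matrix.det_zero_of_column_eq hc fun r => ?_
    rw [Matrix.updateCol_ne hc, Matrix.updateCol_self, ← hcn]
    simp [sylvMat, sylvRow, hcm]

lemma coeff_symSubres_succ (n : ℕ) : (symSubres A B d (m + 1)).coeff n =
    if n < d - (m + 1) + 1 then (sylvMat A B d (m + 1) n).det else 0 := by
  simp [symSubres, coeff_C_mul, coeff_X_pow]

lemma symSubres_zero : symSubres A B d 0 = B := if_pos rfl

variable {m} in
lemma det_sylvMat_zero_eq_coeff (hm : 0 < m) :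
    (sylvMat A B d m 0).det = (symSubres A B d m).coeff 0 := by
  obtain ⟨m, rfl⟩ := Nat.exists_eq_add_one.2 hm
  rw [coeff_symSubres_succ, if_pos (Nat.succ_pos _)]

variable {A B d} in
lemma det_updateCol_sylvMat_eq_coeff (hA : A.natDegree ≤ d) (hB : B.natDegree ≤ d) (n : ℕ) :
    ((sylvMat A B d (m + 1) 0).updateCol ⟨m, by lia⟩
      (fun r => (sylvRow A B (m + 1) r).coeff n)).det =
      (X ^ m * symSubres A B d (m + 1)).coeff n := by
  rw [coeff_X_pow_mul', coeff_symSubres_succ]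
  by_cases hn : m ≤ n ∧ n < d
  · obtain ⟨l, rfl⟩ := Nat.exists_eq_add_of_le hn.1
    rw [updateCol_sylvMat_coeff_sylvRow, if_pos hn.1, Nat.add_sub_cancel_left, if_pos (by lia)]
  · rw [det_updateCol_sylvMat_eq_zero m hA hB (by lia)]
    split_ifs with hmn hlt
    · rw [← updateCol_sylvMat_coeff_sylvRow, det_updateCol_sylvMat_eq_zero m hA hB (by lia)]
    · rfl
    · rfl

variable {A B d} in
lemma degree_symSubres_succ_lt (hA : A.natDegree ≤ d) (hB : B.natDegree ≤ d) :
    (symSubres A B d (m + 1)).degree < ((d - m : ℕ) : WithBot ℕ) := by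
  refine (degree_lt_iff_coeff_zero _ _).2 fun n hn => ?_
  rw [← coeff_X_pow_mul, ← det_updateCol_sylvMat_eq_coeff m hA hB,
    det_updateCol_sylvMat_eq_zero m hA hB (by lia)]

/-- The weight of row `r` in the Laplace expansion of `Sylv_{m+1,ℓ}(A,B)` along its column of
index `m`, the only one which depends on `ℓ`. -/
noncomputable def sylvCofactor (r : Fin (2 * (m + 1))) : R :=
  (sylvMat A B d (m + 1) 0).adjugate ⟨m, by lia⟩ r

lemma sum_sylvCofactor_mul (v : Fin (2 * (m + 1)) → R) :
    ∑ r, sylvCofactor A B d m r * v r =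
      ((sylvMat A B d (m + 1) 0).updateCol ⟨m, by lia⟩ v).det := by
  rw [← Matrix.cramer_apply, Matrix.cramer_eq_adjugate_mulVec]
  rfl

variable {A B d} in
lemma sum_C_sylvCofactor_mul_sylvRow (hA : A.natDegree ≤ d) (hB : B.natDegree ≤ d) :
    ∑ r : Fin (2 * (m + 1)), C (sylvCofactor A B d m r) * sylvRow A B (m + 1) r =
      X ^ m * symSubres A B d (m + 1) := by
  ext n
  simp only [finsetSum_coeff, coeff_C_mul]
  rw [sum_sylvCofactor_mul A B d m fun r => (sylvRow A B (m + 1) r).coeff n,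
    det_updateCol_sylvMat_eq_coeff m hA hB]

lemma submatrix_sylvMat_last_apply (r c : Fin (2 * m + 1)) :
    (sylvMat A B d (m + 1) 0).submatrix (Fin.last (2 * m + 1)).succAbove
        (Fin.succAbove (⟨m, by lia⟩ : Fin (2 * m + 2))) r c =
      (sylvRow A B (m + 1) r).coeff (if (c : ℕ) < m then (c : ℕ) else d + (c - m)) := by
  have hc : ((Fin.succAbove (⟨m, by lia⟩ : Fin (2 * m + 2)) c : Fin (2 * m + 2)) : ℕ) =
      if (c : ℕ) < m then (c : ℕ) else c + 1 := by
    simp only [Fin.succAbove, Fin.lt_def, Fin.val_castSucc]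
    split_ifs <;> rfl
  rw [Matrix.submatrix_apply, Fin.succAbove_last, sylvMat, sylvRow, Fin.val_castSucc, hc]
  congr 1
  split_ifs <;> lia

lemma submatrix_sylvMat_eq_sylvMat :
    (((sylvMat A B d (m + 1) 0).submatrix (Fin.last (2 * m + 1)).succAbove
        (Fin.succAbove (⟨m, by lia⟩ : Fin (2 * m + 2)))).submatrix
      (Fin.succAbove (⟨m, by lia⟩ : Fin (2 * m + 1))) (Fin.last (2 * m)).succAbove) =
      sylvMat A B d m 0 := by
  ext r c
  have hr : ((Fin.succAbove (⟨m, by lia⟩ : Fin (2 * m + 1)) r : Fin (2 * m + 1)) : ℕ) =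
      if (r : ℕ) < m then (r : ℕ) else r + 1 := by
    simp only [Fin.succAbove, Fin.lt_def, Fin.val_castSucc]
    split_ifs <;> rfl
  have hrow : sylvRow A B (m + 1) (if (r : ℕ) < m then (r : ℕ) else r + 1) = sylvRow A B m r := by
    unfold sylvRow
    by_cases hrm : (r : ℕ) < m
    · rw [if_pos hrm, if_pos hrm, if_pos (by lia)]
    · rw [if_neg hrm, if_neg hrm, if_neg (by lia), Nat.add_sub_add_right]
  rw [Matrix.submatrix_apply, submatrix_sylvMat_last_apply, Fin.succAbove_last, Fin.val_castSucc,
    hr, hrow, sylvMat, ← sylvRow]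
  congr 1
  split_ifs <;> lia

variable {A B d} in
lemma sylvCofactor_last (hA : A.natDegree ≤ d) (hB : B.natDegree ≤ d) :
    sylvCofactor A B d m ⟨2 * m + 1, by lia⟩ = -(A.coeff d * (sylvMat A B d m 0).det) := by
  have hcol : ∀ r : Fin (2 * m + 1), (sylvMat A B d (m + 1) 0).submatrix
      (Fin.last (2 * m + 1)).succAbove (Fin.succAbove (⟨m, by lia⟩ : Fin (2 * m + 2)))
      r (Fin.last (2 * m)) = if (r : ℕ) = m then A.coeff d else 0 := by
    intro r
    rw [submatrix_sylvMat_last_apply, Fin.val_last, if_neg (by lia)]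
    split_ifs with hr
    · rw [sylvRow, if_pos (by lia), hr, show d + (2 * m - m) = d + m by lia, coeff_X_pow_mul]
    · exact coeff_sylvRow_eq_zero hA hB (by lia) (by lia)
  have hsign : (-1 : R) ^ (2 * m + 1 + m) * (-1) ^ (m + 2 * m) = -1 := by
    rw [← pow_add]
    exact Odd.neg_one_pow ⟨3 * m, by lia⟩
  have hdet := Matrix.det_succ_column ((sylvMat A B d (m + 1) 0).submatrix
    (Fin.last (2 * m + 1)).succAbove (Fin.succAbove (⟨m, by lia⟩ : Fin (2 * m + 2))))
    (Fin.last (2 * m))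
  rw [Finset.sum_eq_single (⟨m, by lia⟩ : Fin (2 * m + 1))] at hdet
  · rw [hcol, if_pos rfl, submatrix_sylvMat_eq_sylvMat, Fin.val_last] at hdet
    refine (Matrix.adjugate_fin_succ_eq_det_submatrix (n := 2 * m + 1)
      (sylvMat A B d (m + 1) 0) ⟨m, by lia⟩ (Fin.last (2 * m + 1))).trans ?_
    rw [hdet, Fin.val_last]
    linear_combination A.coeff d * (sylvMat A B d m 0).det * hsign
  · intro r _ hr
    have hrm : (r : ℕ) ≠ m := fun h => hr (Fin.ext h)
    rw [hcol, if_neg hrm, mul_zero, zero_mul]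
  · exact fun h => absurd (Finset.mem_univ _) h

variable {A B d} in
theorem exists_cofactors_symSubres_succ (hA : A.natDegree ≤ d) (hB : B.natDegree ≤ d) :
    ∃ U V : R[X], U * A + V * B = X ^ m * symSubres A B d (m + 1) ∧ V.natDegree ≤ m ∧
      V.coeff m = -(A.coeff d * (sylvMat A B d m 0).det) := by
  refine ⟨∑ r : Fin (2 * (m + 1)), if (r : ℕ) < m + 1 then
      C (sylvCofactor A B d m r) * X ^ (r : ℕ) else 0,
    ∑ r : Fin (2 * (m + 1)), if (r : ℕ) < m + 1 then 0 else
      C (sylvCofactor A B d m r) * X ^ ((r : ℕ) - (m + 1)), ?_, ?_, ?_⟩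
  · rw [← sum_C_sylvCofactor_mul_sylvRow m hA hB, Finset.sum_mul, Finset.sum_mul,
      ← Finset.sum_add_distrib]
    refine Finset.sum_congr rfl fun r _ => ?_
    unfold sylvRow
    split_ifs <;> ring
  · refine natDegree_sum_le_of_forall_le _ _ fun r _ => ?_
    split_ifs
    · exact natDegree_zero.trans_le (Nat.zero_le m)
    · exact (natDegree_C_mul_X_pow_le _ _).trans (by lia)
  · rw [finsetSum_coeff, Finset.sum_eq_single (⟨2 * m + 1, by lia⟩ : Fin (2 * (m + 1)))]
    · rw [if_neg (by dsimp only; lia), coeff_C_mul_X_pow, if_pos (by dsimp only; lia),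
        sylvCofactor_last m hA hB]
    · intro r _ hr
      have hr' : (r : ℕ) ≠ 2 * m + 1 := fun h => hr (Fin.ext h)
      split_ifs
      · exact coeff_zero m
      · rw [coeff_C_mul_X_pow, if_neg (by lia)]
    · exact fun h => absurd (Finset.mem_univ _) h

variable {A B d} in
lemma exists_cofactors_symSubres (hA : A.natDegree ≤ d) (hB : B.natDegree ≤ d) :
    ∃ U V : R[X], U * A + V * B = X ^ m * symSubres A B d m ∧ V.natDegree ≤ m := by
  rcases m with _ | m
  · exact ⟨0, 1, by rw [symSubres_zero]; ring, natDegree_one.le⟩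
  · obtain ⟨U, V, hUV, hV, -⟩ := exists_cofactors_symSubres_succ m hA hB
    refine ⟨X * U, X * V, by rw [pow_succ]; linear_combination X * hUV, ?_⟩
    exact natDegree_mul_le.trans
      ((add_le_add natDegree_X_le hV).trans (Nat.add_comm 1 m).le)

end Sylvester

section StructureTheorem

variable {R : Type*} [CommRing R] {A B : R[X]} {d j α β : ℕ}

theorem exists_symSubres_division [IsDomain R] {T : R[X]} (hA : A.natDegree = d)
    (hB : B.natDegree ≤ d) (hA0 : A.coeff 0 ≠ 0) (hS : (symSubres A B d j).natDegree + j = d)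
    (hT : symSubres A B d (j + 1) = X ^ α * T) (hT0 : T.coeff 0 ≠ 0)
    (hTdeg : j + α + β + T.natDegree = d) :
    ∃ Q, C (T.leadingCoeff * (sylvMat A B d (j + α + β) 0).det) * symSubres A B d j =
      Q * T + X ^ β * -(C ((symSubres A B d j).leadingCoeff * (sylvMat A B d j 0).det) *
        symSubres A B d (j + α + β + 1)) := by
  subst hA
  obtain ⟨U, V, hUV, hV⟩ := exists_cofactors_symSubres j le_rfl hB
  obtain ⟨U', V', hUV', hV', hs'⟩ := exists_cofactors_symSubres_succ j le_rfl hB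
  obtain ⟨U'', V'', hUV'', hV'', hs''⟩ :=
    exists_cofactors_symSubres_succ (j + α + β) le_rfl hB
  have hlt' := degree_symSubres_succ_lt j le_rfl hB
  have hlt'' := degree_symSubres_succ_lt (j + α + β) le_rfl hB
  set S := symSubres A B A.natDegree j
  set S' := symSubres A B A.natDegree (j + 1)
  set S'' := symSubres A B A.natDegree (j + α + β + 1)
  set s := (sylvMat A B A.natDegree j 0).det
  set s'' := (sylvMat A B A.natDegree (j + α + β) 0).det
  have hcross : U * V' - U' * V = X ^ j * C (-(S.leadingCoeff * s)) := by
    refine cross_cofactors_eq_monomial hA0 hUV hUV' hV' (by lia) ?_ hs'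
    exact (degree_mul_lt_of_natDegree_le hV hlt').trans_eq (by congr 1; lia)
  have hcross' : U' * V'' - U'' * V' = X ^ (j + α) * C (-(T.leadingCoeff * s'')) := by
    refine cross_cofactors_eq_monomial (P₂ := X ^ β * S'') hA0 (by rw [hUV', hT]; ring)
      (by rw [hUV'']; ring) hV'' hTdeg ?_ hs''
    have hVX : (V' * X ^ β).natDegree ≤ j + β :=
      natDegree_mul_le.trans (add_le_add hV' (natDegree_X_pow_le β))
    rw [← mul_assoc]
    refine (degree_mul_lt_of_natDegree_le hVX hlt'').trans_le ?_
    exact_mod_cast (by lia : j + β + (A.natDegree - (j + α + β)) ≤ A.natDegree)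
  rw [C_neg] at hcross hcross'
  have hpluecker : T * (U'' * V - U * V'') = X ^ j * (C (T.leadingCoeff * s'') * S +
      X ^ β * (C (S.leadingCoeff * s) * S'')) := by
    refine mul_left_cancel₀ (pow_ne_zero (j + α) X_ne_zero) ?_
    rw [hT] at hUV'
    linear_combination (U * V'' - U'' * V) * hUV' - (U * V' - U' * V) * hUV'' -
      (U' * V'' - U'' * V') * hUV - X ^ (j + α + β) * S'' * hcross - X ^ j * S * hcross'
  obtain ⟨q, -, hq⟩ := exists_eq_X_pow_mul_of_mul_eq hT0 hpluecker
  exact ⟨q, by linear_combination -hq⟩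

namespace IsDefective

lemma beta_pos (hA : A.natDegree ≤ d) (hB : B.natDegree ≤ d) (h : IsDefective A B d j α β) :
    0 < β := by
  obtain ⟨-, -, hne, -, hdeg⟩ := h
  have hlt := degree_symSubres_succ_lt j hA hB
  rw [degree_eq_natDegree hne] at hlt
  have : (symSubres A B d (j + 1)).natDegree < d - j := by exact_mod_cast hlt
  lia

lemma coeff_symSubres_succ_ne_zero (h : IsDefective A B d j α β) :
    (symSubres A B d (j + 1)).coeff α ≠ 0 := by
  obtain ⟨-, -, hne, rfl, -⟩ := h
  exact coeff_natTrailingDegree_ne_zero.2 hne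

theorem isSymmRem [IsDomain R] (hA : A.natDegree = d) (hB : B.natDegree ≤ d)
    (hA0 : A.coeff 0 ≠ 0) (h : IsDefective A B d j α β) :
    IsSymmRem (d - j) α β
      (C ((symSubres A B d (j + 1)).leadingCoeff * (symSubres A B d (j + α + β)).coeff 0) *
        symSubres A B d j)
      (symSubres A B d (j + 1))
      (-(C ((symSubres A B d j).leadingCoeff * (sylvMat A B d j 0).det) *
        symSubres A B d (j + α + β + 1))) := by
  have hβ := h.beta_pos hA.le hB
  have hcoeff := h.coeff_symSubres_succ_ne_zero
  obtain ⟨-, hS, hne, hval, hdeg⟩ := h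
  set S' := symSubres A B d (j + 1)
  have hT : X ^ α * (S' /ₘ X ^ α) = S' := X_pow_mul_divByMonic_eq_self hval.ge
  have hT0 : (S' /ₘ X ^ α).coeff 0 ≠ 0 := by rwa [coeff_divByMonic_X_pow, zero_add]
  have hTdeg : (S' /ₘ X ^ α).natDegree = S'.natDegree - α := by
    rw [natDegree_divByMonic S' (monic_X_pow α), natDegree_X_pow]
  have hαS : α ≤ S'.natDegree := hval ▸ natTrailingDegree_le_natDegree S'
  have hlc : S'.leadingCoeff = (S' /ₘ X ^ α).leadingCoeff := by
    conv_lhs => rw [← hT, leadingCoeff_mul, leadingCoeff_X_pow, one_mul]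
  obtain ⟨Q, hQ⟩ := exists_symSubres_division (β := β) hA hB hA0 hS hT.symm hT0 (by lia)
  rw [det_sylvMat_zero_eq_coeff A B d (by lia : 0 < j + α + β), ← hlc] at hQ
  refine ⟨?_, Q, hQ⟩
  rw [degree_neg, ← smul_eq_C_mul, Nat.sub_sub, ← add_assoc]
  exact (degree_smul_le _ _).trans_lt (degree_symSubres_succ_lt (j + α + β) hA.le hB)

end IsDefective

/-- Both cases of the structure theorem at once: `det (sylvMat A B d j 0)` is `S_j(0)` for `j > 0`
and the empty determinant `1` for `j = 0`. -/
theorem structure_theorem_next_general {K : Type*} [CommRing K] [IsDomain K] {φ : R →+* K}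
    (hφ : Function.Injective φ) (hA : A.natDegree = d) (hB : B.natDegree ≤ d)
    (hA0 : A.coeff 0 ≠ 0) (hdef : IsDefective A B d j α β) :
    (∀ S, IsSymmRem (d - j) α β ((symSubres A B d j).map φ) ((symSubres A B d (j + 1)).map φ) S →
      (C ((symSubres A B d j).leadingCoeff * (sylvMat A B d j 0).det) *
          symSubres A B d (j + α + β + 1)).map φ =
        -C (φ ((symSubres A B d (j + 1)).leadingCoeff *
          (symSubres A B d (j + α + β)).coeff 0)) * S) ∧
    (∀ S, IsSymmRem (d - j) α β
        ((C ((symSubres A B d (j + 1)).leadingCoeff * (symSubres A B d (j + α + β)).coeff 0) *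
          symSubres A B d j).map φ) ((symSubres A B d (j + 1)).map φ) S →
      (C ((symSubres A B d j).leadingCoeff * (sylvMat A B d j 0).det) *
          symSubres A B d (j + α + β + 1)).map φ = -S) := by
  have : IsDomain R := hφ.isDomain φ
  have hα : ((symSubres A B d (j + 1)).map φ).coeff α ≠ 0 := by
    rw [coeff_map]
    exact (map_ne_zero_iff φ hφ).2 hdef.coeff_symSubres_succ_ne_zero
  have hβ : d - j - (α + β) ≤ ((symSubres A B d (j + 1)).map φ).natDegree - α := by
    have := hdef.2.2.2.2
    rw [natDegree_map_eq_of_injective hφ]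
    lia
  have hrem := (hdef.isSymmRem hA hB hA0).map φ
  rw [Polynomial.map_neg] at hrem
  refine ⟨fun S hS => ?_, fun S hS => ?_⟩
  · have hCS := hS.C_mul (φ ((symSubres A B d (j + 1)).leadingCoeff *
      (symSubres A B d (j + α + β)).coeff 0))
    rw [← map_C, ← Polynomial.map_mul] at hCS
    rw [neg_mul, ← map_C, ← IsSymmRem.unique hα hβ hrem hCS, neg_neg]
  · rw [← IsSymmRem.unique hα hβ hrem hS, neg_neg]

end StructureTheorem

/-- Structure theorem, part 3: if `(S_j, S_{j+1})` is `(α,β)`-defective, then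
`lc(S_j)·S_j(0)·S_{j+α+β+1} = -lc(S_{j+1})·S_{j+α+β}(0)·srem(S_j, S_{j+1})
  = -srem(lc(S_{j+1})·S_{j+α+β}(0)·S_j, S_{j+1})` when `j > 0`, and
`b_d·S_{α+β+1} = -srem(lc(S_1)·S_{α+β}(0)·S_0, S_1)` when `j = 0`.  Symmetric remainders,
which live over the fraction field of `D` (inside `ℂ`), are characterized by the defining
property of the symmetric division. -/
theorem structure_theorem_next (D : Subring ℂ) (A B : Polynomial D) (d j α β : ℕ)
    (hAdeg : A.degree = (d : ℕ)) (hBdeg : B.degree = (d : ℕ))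
    (hAval : A.coeff 0 ≠ 0) (hBval : B.coeff 0 ≠ 0)
    (hdef : IsDefective A B d j α β) :
    (0 < j →
      (∀ Q R : Polynomial ℂ,
        Q.degree = ((α + β : ℕ) : WithBot ℕ) →
        R.degree < ((d - j - (α + β) : ℕ) : WithBot ℕ) →
        (symSubres A B d j).map D.subtype =
          Q * ((symSubres A B d (j + 1)).map D.subtype /ₘ X ^ α) + X ^ β * R →
        (C ((symSubres A B d j).leadingCoeff * (symSubres A B d j).coeff 0) *
            symSubres A B d (j + α + β + 1)).map D.subtype =
          - C (D.subtype ((symSubres A B d (j + 1)).leadingCoeff *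
              (symSubres A B d (j + α + β)).coeff 0)) * R) ∧
      (∀ Q R : Polynomial ℂ,
        Q.degree = ((α + β : ℕ) : WithBot ℕ) →
        R.degree < ((d - j - (α + β) : ℕ) : WithBot ℕ) →
        (C ((symSubres A B d (j + 1)).leadingCoeff * (symSubres A B d (j + α + β)).coeff 0) *
            symSubres A B d j).map D.subtype =
          Q * ((symSubres A B d (j + 1)).map D.subtype /ₘ X ^ α) + X ^ β * R →
        (C ((symSubres A B d j).leadingCoeff * (symSubres A B d j).coeff 0) *
            symSubres A B d (j + α + β + 1)).map D.subtype = - R)) ∧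
    (j = 0 →
      ∀ Q R : Polynomial ℂ,
        Q.degree = ((α + β : ℕ) : WithBot ℕ) →
        R.degree < ((d - (α + β) : ℕ) : WithBot ℕ) →
        (C ((symSubres A B d 1).leadingCoeff * (symSubres A B d (α + β)).coeff 0) *
            symSubres A B d 0).map D.subtype =
          Q * ((symSubres A B d 1).map D.subtype /ₘ X ^ α) + X ^ β * R →
        (C (B.coeff d) * symSubres A B d (α + β + 1)).map D.subtype = - R) := by
  have hnext := structure_theorem_next_general (φ := D.subtype) Subtype.val_injective
    (natDegree_eq_of_degree_eq_some hAdeg) (natDegree_eq_of_degree_eq_some hBdeg).le hAval hdef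
  refine ⟨fun hj => ?_, ?_⟩
  · rw [det_sylvMat_zero_eq_coeff A B d hj] at hnext
    exact ⟨fun Q R _ hR h => hnext.1 R ⟨hR, Q, h⟩, fun Q R _ hR h => hnext.2 R ⟨hR, Q, h⟩⟩
  · rintro rfl Q R - hR h
    have hlc : (symSubres A B d 0).leadingCoeff = B.coeff d := by
      rw [symSubres_zero, leadingCoeff, natDegree_eq_of_degree_eq_some hBdeg]
    have hdet : (sylvMat A B d 0 0).det = 1 := Matrix.det_fin_zero
    simp only [hlc, hdet, mul_one, zero_add, Nat.sub_zero] at hnext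
    exact hnext.2 R ⟨hR, Q, h⟩
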